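/- Let N = kn, let D̂ ∈ S^{N+1} be the matrix with zero 0-th row and column and lower-right block D ∈ S^N, let J be the gangster index set, let Y = { Y ∈ S^{N+1} : Y_{00} = 1, Y_{ij} = 0 for (i,j) ∈ J, Y_{ii} = Y_{0i} for i = 1..N, 0 ≤ Y_{ij} ≤ 1 for all i,j }, let R = { R ∈ S^{N+1−k} : R ⪰ 0, trace(R) = k+1 }, and let V ∈ ℝ^{(N+1)×(N+1−k)} satisfy VᵀV = I. Then for every Z ∈ S^{N+1} and every pair (Y,R) with Y = V R Vᵀ, Y ∈ Y, R ∈ R, one has ⟨D̂, Y⟩ ≥ inf_{Y' ∈ Y} ⟨D̂ + Z, Y'⟩ − (k+1) λ_max(Vᵀ Z V). In particular the right-hand side is a lower bound on the optimal value p*_DNN of the DNN relaxation for every Z. -/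

import Mathlib

open Matrix

/-!
Split `⟨C, Y⟩ = ⟨C + Z, Y⟩ - ⟨Z, Y⟩` at the feasible point `Y = V * R * Vᵀ`. The first term is at
least its infimum over the feasible set, and the second equals `⟨M, R⟩` for `M = Vᵀ * Z * V`. Both
`λ_max(M) • 1 - M` and `R` are positive semidefinite, so the trace of their product is nonnegative,
which says that `⟨M, R⟩ ≤ λ_max(M) * trace R`.
-/

section Spectral

open scoped ComplexOrder MatrixOrder

variable {m 𝕜 : Type*} [Fintype m] [RCLike 𝕜]

theorem trace_mul_nonneg_of_posSemidef {A B : Matrix m m 𝕜} (hA : A.PosSemidef)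
    (hB : B.PosSemidef) : 0 ≤ (A * B).trace := by
  classical
  obtain ⟨X, rfl⟩ := CStarAlgebra.nonneg_iff_eq_star_mul_self.mp hB.nonneg
  calc 0 ≤ (X * A * Xᴴ).trace := (hA.mul_mul_conjTranspose_same X).trace_nonneg
    _ = (A * (Xᴴ * X)).trace := by rw [← Matrix.mul_assoc, ← trace_mul_cycle]

variable [DecidableEq m]

theorem le_iSup_eigenvalues_smul_one {M : Matrix m m 𝕜} (hM : M.IsHermitian) :
    M ≤ (⨆ i, hM.eigenvalues i) • (1 : Matrix m m 𝕜) := by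
  rw [← Algebra.algebraMap_eq_smul_one]
  refine le_algebraMap_of_spectrum_le (fun x hx ↦ ?_) hM.isSelfAdjoint
  obtain ⟨i, rfl⟩ := hM.spectrum_real_eq_range_eigenvalues ▸ hx
  exact le_ciSup (Set.finite_range hM.eigenvalues).bddAbove i

theorem trace_mul_le_trace_mul_iSup_eigenvalues {M R : Matrix m m 𝕜} (hM : M.IsHermitian)
    (hR : R.PosSemidef) : (M * R).trace ≤ R.trace * (⨆ i, hM.eigenvalues i : ℝ) := by
  have hgap : (((⨆ i, hM.eigenvalues i) • (1 : Matrix m m 𝕜) - M) * R).trace =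
      R.trace * (⨆ i, hM.eigenvalues i : ℝ) - (M * R).trace := by
    rw [Matrix.sub_mul, smul_mul_assoc, Matrix.one_mul, trace_sub, trace_smul,
      RCLike.real_smul_eq_coe_mul, mul_comm]
  rw [← sub_nonneg, ← hgap]
  exact trace_mul_nonneg_of_posSemidef (le_iff.mp (le_iSup_eigenvalues_smul_one hM)) hR

end Spectral

theorem bddBelow_trace_mul_image_of_isBounded {m n : Type*} [Fintype m] [Fintype n]
    (C : Matrix m n ℝ) {S : Set (Matrix n m ℝ)} {K : Set ℝ} (hK : Bornology.IsBounded K)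
    (hSK : S ⊆ K.matrix) :
    BddBelow ((fun Y ↦ (C * Y).trace) '' S) := by
  have hcont : Continuous fun Y : Matrix n m ℝ ↦ (C * Y).trace := by fun_prop
  have hS : S ⊆ (closure K).matrix := fun Y hY i j ↦ subset_closure (hSK hY i j)
  exact (hK.isCompact_closure.matrix.bddBelow_image hcont.continuousOn).mono (Set.image_mono hS)

theorem dnn_weak_duality_lower_bound_general {m p : Type*} [Fintype m] [Fintype p] [DecidableEq p]
    {C Z : Matrix m m ℝ} {S : Set (Matrix m m ℝ)} {V : Matrix m p ℝ} {R : Matrix p p ℝ}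
    (hS : BddBelow ((fun Y ↦ ((C + Z) * Y).trace) '' S)) (hZV : (Vᵀ * Z * V).IsHermitian)
    (hR : R.PosSemidef) (hVR : V * R * Vᵀ ∈ S) :
    sInf ((fun Y ↦ ((C + Z) * Y).trace) '' S) - R.trace * (⨆ i, hZV.eigenvalues i) ≤
      (C * (V * R * Vᵀ)).trace := by
  have hadjoint : (Z * (V * R * Vᵀ)).trace = (Vᵀ * Z * V * R).trace := by
    rw [← Matrix.mul_assoc, trace_mul_comm]
    simp only [Matrix.mul_assoc]
  calc sInf ((fun Y ↦ ((C + Z) * Y).trace) '' S) - R.trace * (⨆ i, hZV.eigenvalues i)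
    _ ≤ ((C + Z) * (V * R * Vᵀ)).trace - (Vᵀ * Z * V * R).trace :=
      sub_le_sub (csInf_le hS (Set.mem_image_of_mem _ hVR))
        (trace_mul_le_trace_mul_iSup_eigenvalues hZV hR)
    _ = (C * (V * R * Vᵀ)).trace := by
      rw [← hadjoint, ← trace_sub, ← Matrix.sub_mul, add_sub_cancel_right]

/-- weak duality bound for the facially reduced DNN relaxation:
for every symmetric `Z` and every feasible pair `(Y,R)` with `Y = VRVᵀ`, `Y ∈ 𝒴`,
`R ⪰ 0`, `trace R = k+1`, one has
`⟨D̂,Y⟩ ≥ inf_{Y' ∈ 𝒴} ⟨D̂+Z, Y'⟩ − (k+1) λ_max(VᵀZV)`.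
The index `0` is `Sum.inl ()`. -/
theorem dnn_weak_duality_lower_bound
    (k n : ℕ)
    (D : Matrix (Fin k × Fin n) (Fin k × Fin n) ℝ) (hD : D.IsSymm)
    (Dhat : Matrix (Unit ⊕ Fin k × Fin n) (Unit ⊕ Fin k × Fin n) ℝ)
    (hDhat : Dhat = Matrix.fromBlocks 0 0 0 D)
    (Yset : Set (Matrix (Unit ⊕ Fin k × Fin n) (Unit ⊕ Fin k × Fin n) ℝ))
    (hYset : Yset = {Y | Y (Sum.inl ()) (Sum.inl ()) = 1 ∧
      (∀ (s : Fin k) (i j : Fin n), i ≠ j → Y (Sum.inr (s, i)) (Sum.inr (s, j)) = 0) ∧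
      (∀ p : Fin k × Fin n, Y (Sum.inr p) (Sum.inr p) = Y (Sum.inl ()) (Sum.inr p)) ∧
      ∀ a b, 0 ≤ Y a b ∧ Y a b ≤ 1})
    (V : Matrix (Unit ⊕ Fin k × Fin n) (Fin (k * n + 1 - k)) ℝ)
    (hV : Vᵀ * V = 1)
    (Z : Matrix (Unit ⊕ Fin k × Fin n) (Unit ⊕ Fin k × Fin n) ℝ)
    (hZ : Z.IsHermitian) (hZV : (Vᵀ * Z * V).IsHermitian)
    (Y : Matrix (Unit ⊕ Fin k × Fin n) (Unit ⊕ Fin k × Fin n) ℝ)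
    (R : Matrix (Fin (k * n + 1 - k)) (Fin (k * n + 1 - k)) ℝ)
    (hYR : Y = V * R * Vᵀ) (hYmem : Y ∈ Yset)
    (hRpsd : R.PosSemidef) (hRtr : R.trace = (k : ℝ) + 1) :
    sInf {t : ℝ | ∃ Y' ∈ Yset, t = ((Dhat + Z) * Y').trace} -
        ((k : ℝ) + 1) * (⨆ i, hZV.eigenvalues i) ≤ (Dhat * Y).trace := by
  subst hYR
  have hbdd := bddBelow_trace_mul_image_of_isBounded (Dhat + Z) (Metric.isBounded_Icc 0 1)
    fun Y' (hY' : Y' ∈ Yset) ↦ (hYset ▸ hY').2.2.2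
  simpa only [hRtr, Set.image, eq_comm] using
    dnn_weak_duality_lower_bound_general hbdd hZV hRpsd hYmem
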